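/- arXiv:1706.05828 — 3 statements merged into one kernel-verified Lean document; each statement's English description precedes it below -/
import Mathlib

section
/- (Spectral factorization.) Let X be a symmetric solution of CGCARE(Σ), and for s ∈ ℂ with s I_n − A invertible set W(s) = R^{1/2} R† S_Xᵀ (s I_n − A)⁻¹ B + R^{1/2}. Then for every s ∈ ℂ such that both s I_n − A and −s I_n − Aᵀ are invertible, the Popov function satisfies Φ(s) = Bᵀ(−s I_n − Aᵀ)⁻¹ Q (s I_n − A)⁻¹ B + Bᵀ(−s I_n − Aᵀ)⁻¹ S + Sᵀ (s I_n − A)⁻¹ B + R = W(−s)ᵀ W(s). -/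
/-!
Two facts combine. First, the Popov function does not change when `(Q, S)` is replaced by
`(Q + X A + Aᵀ X, S + X B)` with `X` symmetric: the terms `± s X` cancel in
`X A + Aᵀ X = -(X (s I - A) + (-s I - Aᵀ) X)`, so the resolvents on either side absorb one factor
each. Second, put `T = S + X B`. The kernel condition amounts to `R R† Tᵀ = Tᵀ`, and expanding
`W(-s)ᵀ W(s)` with it gives the Popov function of the data `(T R† Tᵀ, T, R)`. The Riccati equation
says exactly that `Q + X A + Aᵀ X = T R† Tᵀ`.
-/

open Matrix

/-- Entrywise embedding of a real matrix into the complex matrices. -/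
def cm {α β : Type*} (M : Matrix α β ℝ) : Matrix α β ℂ := M.map Complex.ofReal

lemma mul_eq_self_of_mulVec_eq_zero_imp {l m n k : Type*} [Fintype m] [Ring k] {T : Matrix n m k}
    {R : Matrix l m k} {P : Matrix m m k} (hker : ∀ v, R *ᵥ v = 0 → T *ᵥ v = 0) (hP : R * P = R) :
    T * P = T := by
  classical
  refine ext_of_mulVec_single fun j ↦ ?_
  have hR : R *ᵥ (P *ᵥ Pi.single j 1 - Pi.single j 1) = 0 := by
    rw [mulVec_sub, mulVec_mulVec, hP, sub_self]
  have hT := hker _ hR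
  rwa [mulVec_sub, mulVec_mulVec, sub_eq_zero] at hT

lemma transpose_smul_one_sub {n K : Type*} [DecidableEq n] [Ring K] (A : Matrix n n K) (s : K) :
    (s • (1 : Matrix n n K) - A)ᵀ = s • (1 : Matrix n n K) - Aᵀ := by
  rw [transpose_sub, transpose_smul, transpose_one]

section PopovFunction

variable {n m p K : Type*} [Fintype n] [DecidableEq n] [CommRing K]

/-- The Popov function `Φ(s)` of the system `(A, B)` with Popov matrix `[[Q, S], [Sᵀ, R]]`.
It has its intended meaning where `s I - A` and `-s I - Aᵀ` are invertible; elsewhere the inverses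
take the junk value `0`. -/
noncomputable def popovFunction (A Q : Matrix n n K) (B S : Matrix n m K) (R : Matrix m m K)
    (s : K) : Matrix m m K :=
  Bᵀ * (-s • (1 : Matrix n n K) - Aᵀ)⁻¹ * Q * (s • (1 : Matrix n n K) - A)⁻¹ * B
    + Bᵀ * (-s • (1 : Matrix n n K) - Aᵀ)⁻¹ * S
    + Sᵀ * (s • (1 : Matrix n n K) - A)⁻¹ * B
    + R

/-- The spectral factor `W(s) = H R† Tᵀ (s I - A)⁻¹ B + H`, where `T` stands for `S + X B`, `Rd` for
`R†` and `H`, possibly rectangular, for a factor of `R = Hᵀ H`. -/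
noncomputable def spectralFactor [Fintype m] (A : Matrix n n K) (B T : Matrix n m K)
    (Rd : Matrix m m K) (H : Matrix p m K) (s : K) : Matrix p m K :=
  H * Rd * Tᵀ * (s • (1 : Matrix n n K) - A)⁻¹ * B + H

lemma isUnit_det_smul_one_sub_transpose {A : Matrix n n K} {s : K} :
    IsUnit (s • (1 : Matrix n n K) - Aᵀ).det ↔ IsUnit (s • (1 : Matrix n n K) - A).det := by
  rw [← transpose_smul_one_sub, det_transpose]

lemma popovFunction_add_mul_add_transpose_mul {A X : Matrix n n K} (Q : Matrix n n K)
    (B S : Matrix n m K) (R : Matrix m m K) {s : K} (hX : X.IsSymm)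
    (hA : IsUnit (s • (1 : Matrix n n K) - A).det)
    (hAt : IsUnit (-s • (1 : Matrix n n K) - Aᵀ).det) :
    popovFunction A (Q + X * A + Aᵀ * X) B (S + X * B) R s = popovFunction A Q B S R s := by
  unfold popovFunction
  set F := s • (1 : Matrix n n K) - A with hF
  set G := -s • (1 : Matrix n n K) - Aᵀ with hG
  have lyapunov : X * A + Aᵀ * X = -(X * F + G * X) := by
    simp only [hF, hG, Matrix.mul_sub, Matrix.sub_mul, Matrix.mul_smul, Matrix.smul_mul,
      Matrix.mul_one, Matrix.one_mul, neg_smul, Matrix.neg_mul]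
    abel
  have sandwich : G⁻¹ * (X * F + G * X) * F⁻¹ = G⁻¹ * X + X * F⁻¹ := by
    rw [Matrix.mul_add, Matrix.add_mul, nonsing_inv_mul_cancel_left _ _ hAt, ← Matrix.mul_assoc,
      mul_nonsing_inv_cancel_right _ _ hA]
  have quadratic : Bᵀ * G⁻¹ * (Q + X * A + Aᵀ * X) * F⁻¹ * B
      = Bᵀ * G⁻¹ * Q * F⁻¹ * B - (Bᵀ * G⁻¹ * X * B + Bᵀ * X * F⁻¹ * B) := by
    calc Bᵀ * G⁻¹ * (Q + X * A + Aᵀ * X) * F⁻¹ * B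
        = Bᵀ * G⁻¹ * Q * F⁻¹ * B - Bᵀ * (G⁻¹ * (X * F + G * X) * F⁻¹) * B := by
          rw [add_assoc, lyapunov]
          simp only [← sub_eq_add_neg, Matrix.mul_sub, Matrix.sub_mul, Matrix.mul_assoc]
      _ = _ := by rw [sandwich]; simp only [Matrix.mul_add, Matrix.add_mul, Matrix.mul_assoc]
  rw [quadratic, transpose_add, transpose_mul, hX.eq]
  simp only [Matrix.mul_add, Matrix.add_mul, ← Matrix.mul_assoc]
  abel

lemma transpose_spectralFactor_neg_mul_spectralFactor [Fintype m] [Fintype p] (A : Matrix n n K)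
    (B : Matrix n m K) {T : Matrix n m K} {R Rd : Matrix m m K} {H : Matrix p m K} (s : K)
    (hH : Hᵀ * H = R) (hT : R * Rd * Tᵀ = Tᵀ) :
    (spectralFactor A B T Rd H (-s))ᵀ * spectralFactor A B T Rd H s
      = popovFunction A (T * Rd * Tᵀ) B T R s := by
  have hR : R.IsSymm := by rw [IsSymm, ← hH, transpose_mul, transpose_transpose]
  have hT' : T * Rdᵀ * R = T := by
    simpa [hR.eq, Matrix.mul_assoc] using congrArg transpose hT
  unfold spectralFactor popovFunction
  set M := (s • (1 : Matrix n n K) - A)⁻¹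
  have hN : ((-s • (1 : Matrix n n K) - A)⁻¹)ᵀ = (-s • (1 : Matrix n n K) - Aᵀ)⁻¹ := by
    rw [transpose_nonsing_inv, transpose_smul_one_sub]
  set N := (-s • (1 : Matrix n n K) - Aᵀ)⁻¹
  calc (H * Rd * Tᵀ * (-s • (1 : Matrix n n K) - A)⁻¹ * B + H)ᵀ * (H * Rd * Tᵀ * M * B + H)
      = (Bᵀ * N * T * Rdᵀ * Hᵀ + Hᵀ) * (H * Rd * Tᵀ * M * B + H) := by
        simp only [transpose_add, transpose_mul, transpose_transpose, hN, Matrix.mul_assoc]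
    _ = Bᵀ * N * (T * Rdᵀ * (Hᵀ * H)) * Rd * Tᵀ * M * B + Bᵀ * N * (T * Rdᵀ * (Hᵀ * H))
          + (Hᵀ * H) * Rd * Tᵀ * M * B + Hᵀ * H := by
        simp only [Matrix.mul_add, Matrix.add_mul, Matrix.mul_assoc]
        abel
    _ = Bᵀ * N * (T * Rd * Tᵀ) * M * B + Bᵀ * N * T + Tᵀ * M * B + R := by
        rw [hH, hT', hT]
        simp only [Matrix.mul_assoc]

end PopovFunction

section Riccati

variable {n m p k K : Type*} [Fintype n] [Fintype m] [CommRing k] [CommRing K]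

/-- `X` is a symmetric solution of CGCARE(Σ): it solves the generalized Riccati equation, and
`ker R ⊆ ker (S + X B)`. The matrix `Rd` stands for `R†`, or any other
generalized inverse of `R`. -/
structure IsCGCARESolution (A Q : Matrix n n k) (B S : Matrix n m k) (R Rd : Matrix m m k)
    (X : Matrix n n k) : Prop where
  isSymm : X.IsSymm
  riccati : X * A + Aᵀ * X - (S + X * B) * Rd * (S + X * B)ᵀ + Q = 0
  mulVec_eq_zero : ∀ v, R *ᵥ v = 0 → (S + X * B) *ᵥ v = 0

namespace IsCGCARESolution

variable {A Q X : Matrix n n k} {B S : Matrix n m k} {R Rd : Matrix m m k}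

lemma add_mul_add_transpose_mul (h : IsCGCARESolution A Q B S R Rd X) :
    Q + X * A + Aᵀ * X = (S + X * B) * Rd * (S + X * B)ᵀ := by
  rw [← sub_eq_zero, ← h.riccati]
  abel

lemma mul_mul_transpose_eq (h : IsCGCARESolution A Q B S R Rd X) (hR : R.IsSymm)
    (hRd : R * Rd * R = R) : R * Rd * (S + X * B)ᵀ = (S + X * B)ᵀ := by
  have hRdt : R * (Rdᵀ * R) = R := by
    simpa only [transpose_mul, hR.eq] using congrArg transpose hRd
  have hT := mul_eq_self_of_mulVec_eq_zero_imp h.mulVec_eq_zero hRdt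
  simpa only [transpose_mul, transpose_transpose, hR.eq] using congrArg transpose hT

end IsCGCARESolution

theorem stmt_4_general [DecidableEq n] [Fintype p] (f : k →+* K) {A Q X : Matrix n n k}
    {B S : Matrix n m k} {R Rd : Matrix m m k} {H : Matrix p m k}
    (hRd : R * Rd * R = R) (hH : Hᵀ * H = R) (hX : IsCGCARESolution A Q B S R Rd X) {s : K}
    (hA : IsUnit (s • (1 : Matrix n n K) - A.map f).det)
    (hAt : IsUnit (-s • (1 : Matrix n n K) - (A.map f)ᵀ).det) :
    popovFunction (A.map f) (Q.map f) (B.map f) (S.map f) (R.map f) s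
      = (spectralFactor (A.map f) (B.map f) ((S + X * B).map f) (Rd.map f) (H.map f) (-s))ᵀ
        * spectralFactor (A.map f) (B.map f) ((S + X * B).map f) (Rd.map f) (H.map f) s := by
  have hR : R.IsSymm := by rw [IsSymm, ← hH, transpose_mul, transpose_transpose]
  have hHf : (H.map f)ᵀ * H.map f = R.map f := by rw [← transpose_map, ← Matrix.map_mul, hH]
  have hTf : R.map f * Rd.map f * ((S + X * B).map f)ᵀ = ((S + X * B).map f)ᵀ := by
    rw [← transpose_map, ← Matrix.map_mul, ← Matrix.map_mul, hX.mul_mul_transpose_eq hR hRd]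
  have hQf : Q.map f + X.map f * A.map f + (A.map f)ᵀ * X.map f
      = (S + X * B).map f * Rd.map f * ((S + X * B).map f)ᵀ := by
    simpa only [Matrix.map_add f (map_add f), Matrix.map_mul, transpose_map] using
      congrArg (Matrix.map · f) hX.add_mul_add_transpose_mul
  have hSf : (S + X * B).map f = S.map f + X.map f * B.map f := by
    rw [Matrix.map_add f (map_add f), Matrix.map_mul]
  rw [transpose_spectralFactor_neg_mul_spectralFactor _ _ s hHf hTf, ← hQf, hSf,
    popovFunction_add_mul_add_transpose_mul _ _ _ _ (hX.isSymm.map f) hA hAt]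

end Riccati

theorem stmt_4 (n m : ℕ) (hn : 0 < n) (hm : 0 < m)
    (A Q : Matrix (Fin n) (Fin n) ℝ) (B S : Matrix (Fin n) (Fin m) ℝ)
    (R : Matrix (Fin m) (Fin m) ℝ)
    (hPi : (Matrix.fromBlocks Q S Sᵀ R).PosSemidef)
    (Rd : Matrix (Fin m) (Fin m) ℝ)
    (hRd1 : R * Rd * R = R) (hRd2 : Rd * R * Rd = Rd)
    (hRd3 : (R * Rd)ᵀ = R * Rd) (hRd4 : (Rd * R)ᵀ = Rd * R)
    (Rhalf : Matrix (Fin m) (Fin m) ℝ)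
    (hRhalf : Rhalf.PosSemidef) (hRhalf2 : Rhalf * Rhalf = R)
    (X : Matrix (Fin n) (Fin n) ℝ) (hX : Xᵀ = X)
    (hgcare : X * A + Aᵀ * X - (S + X * B) * Rd * (S + X * B)ᵀ + Q = 0)
    (hker : ∀ v : Fin m → ℝ, R.mulVec v = 0 → (S + X * B).mulVec v = 0)
    (W : ℂ → Matrix (Fin m) (Fin m) ℂ)
    (hW : ∀ z : ℂ, IsUnit (z • (1 : Matrix (Fin n) (Fin n) ℂ) - cm A).det →
      W z = cm Rhalf * cm Rd * (cm (S + X * B))ᵀ *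
          (z • (1 : Matrix (Fin n) (Fin n) ℂ) - cm A)⁻¹ * cm B + cm Rhalf)
    (s : ℂ)
    (h1 : IsUnit (s • (1 : Matrix (Fin n) (Fin n) ℂ) - cm A).det)
    (h2 : IsUnit ((-s) • (1 : Matrix (Fin n) (Fin n) ℂ) - (cm A)ᵀ).det) :
    (cm B)ᵀ * ((-s) • (1 : Matrix (Fin n) (Fin n) ℂ) - (cm A)ᵀ)⁻¹ *
        cm Q * (s • (1 : Matrix (Fin n) (Fin n) ℂ) - cm A)⁻¹ * cm B
      + (cm B)ᵀ * ((-s) • (1 : Matrix (Fin n) (Fin n) ℂ) - (cm A)ᵀ)⁻¹ * cm S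
      + (cm S)ᵀ * (s • (1 : Matrix (Fin n) (Fin n) ℂ) - cm A)⁻¹ * cm B
      + cm R
    = (W (-s))ᵀ * W s := by
  have hH : Rhalfᵀ * Rhalf = R := by
    rwa [(isHermitian_iff_isSymm.1 hRhalf.isHermitian).eq]
  rw [hW _ (isUnit_det_smul_one_sub_transpose.1 h2), hW s h1]
  exact stmt_4_general Complex.ofRealHom hRd1 hH ⟨hX, hgcare, hker⟩ h1 h2
end

section
/- For any symmetric X ∈ ℝ^{n×n} and any s ∈ ℂ such that both s I_n − A and s I_n − A_X are invertible, one has (C (s I_n − A)⁻¹ B + D) · (I_m − R† S_Xᵀ (s I_n − A_X)⁻¹ B) = C_X (s I_n − A_X)⁻¹ B + D, where C_X = C − D R† S_Xᵀ; i.e. the transfer function G(s) = C(s I_n − A)⁻¹ B + D satisfies G(s) T_X(s)⁻¹ = C_X (s I_n − A_X)⁻¹ B + D. -/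
/-!
Put `K = R† S_Xᵀ`, so that `A_X = A - B K` and `C_X = C - D K`. The pencils `M = s I - A` and
`N = s I - A_X` satisfy `N - M = B K`, and the resolvent identity `M⁻¹ - N⁻¹ = M⁻¹ (N - M) N⁻¹`
gives `M⁻¹ B (I - K N⁻¹ B) = N⁻¹ B`. Multiplying by `C` and adding `D (I - K N⁻¹ B)` yields the
claim.
-/

open Matrix

section StateFeedback

variable {R n m p : Type*} [CommRing R] [Fintype n] [DecidableEq n]

/-- The transfer function `C (s I - A)⁻¹ B + D` of the linear system with state matrix `A`, input
matrix `B`, output matrix `C` and feedthrough `D`. At a point `s` where `s I - A` is singular, the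
inverse is `0` and the value is `D`. -/
noncomputable def transferFunction (A : Matrix n n R) (B : Matrix n m R) (C : Matrix p n R)
    (D : Matrix p m R) (s : R) : Matrix p m R :=
  C * (s • (1 : Matrix n n R) - A)⁻¹ * B + D

variable [Fintype m] [DecidableEq m]

lemma inv_mul_mul_one_sub_mul_inv_mul {M N : Matrix n n R} (B : Matrix n m R) (K : Matrix m n R)
    (hM : IsUnit M.det) (hN : IsUnit N.det) (hMN : N - M = B * K) :
    M⁻¹ * B * (1 - K * N⁻¹ * B) = N⁻¹ * B := by
  have resolvent : M⁻¹ - N⁻¹ = M⁻¹ * (B * K) * N⁻¹ := by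
    rw [← hMN]
    exact inv_sub_inv (by simp only [isUnit_iff_isUnit_det, hM, hN])
  calc M⁻¹ * B * (1 - K * N⁻¹ * B)
      = (M⁻¹ - M⁻¹ * (B * K) * N⁻¹) * B := by
        simp only [Matrix.mul_sub, Matrix.sub_mul, Matrix.mul_one, Matrix.mul_assoc]
    _ = N⁻¹ * B := by rw [← resolvent, sub_sub_cancel]

theorem stmt_8_general (A : Matrix n n R) (B : Matrix n m R) (C : Matrix p n R)
    (D : Matrix p m R) (K : Matrix m n R) (s : R)
    (hA : IsUnit (s • (1 : Matrix n n R) - A).det)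
    (hAK : IsUnit (s • (1 : Matrix n n R) - (A - B * K)).det) :
    transferFunction A B C D s * (1 - K * (s • (1 : Matrix n n R) - (A - B * K))⁻¹ * B) =
      transferFunction (A - B * K) B (C - D * K) D s := by
  unfold transferFunction
  set M := s • (1 : Matrix n n R) - A
  set N := s • (1 : Matrix n n R) - (A - B * K)
  have hMN : N - M = B * K := by simp only [M, N, sub_sub_sub_cancel_left, sub_sub_cancel]
  calc (C * M⁻¹ * B + D) * (1 - K * N⁻¹ * B)
      = C * (M⁻¹ * B * (1 - K * N⁻¹ * B)) + D * (1 - K * N⁻¹ * B) := by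
        simp only [Matrix.add_mul, Matrix.mul_assoc]
    _ = C * (N⁻¹ * B) + D * (1 - K * N⁻¹ * B) := by
        rw [inv_mul_mul_one_sub_mul_inv_mul B K hA hAK hMN]
    _ = (C - D * K) * N⁻¹ * B + D := by
        simp only [Matrix.mul_sub, Matrix.sub_mul, Matrix.mul_one, Matrix.mul_assoc]
        abel

end StateFeedback

section RealToComplex

variable {α β γ : Type*}

lemma cm_mul [Fintype β] (M : Matrix α β ℝ) (N : Matrix β γ ℝ) : cm (M * N) = cm M * cm N :=
  Matrix.map_mul (f := Complex.ofRealHom)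

lemma cm_sub (M N : Matrix α β ℝ) : cm (M - N) = cm M - cm N :=
  Matrix.map_sub _ Complex.ofReal_sub M N

lemma cm_transpose (M : Matrix α β ℝ) : cm Mᵀ = (cm M)ᵀ :=
  transpose_map

end RealToComplex

theorem stmt_8 (n m p : ℕ) (hn : 0 < n) (hm : 0 < m) (hp : 0 < p)
    (A Q : Matrix (Fin n) (Fin n) ℝ) (B S : Matrix (Fin n) (Fin m) ℝ)
    (R : Matrix (Fin m) (Fin m) ℝ)
    (C : Matrix (Fin p) (Fin n) ℝ) (D : Matrix (Fin p) (Fin m) ℝ)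
    (hQ : Q = Cᵀ * C) (hS : S = Cᵀ * D) (hR : R = Dᵀ * D)
    (Rd : Matrix (Fin m) (Fin m) ℝ)
    (hRd1 : R * Rd * R = R) (hRd2 : Rd * R * Rd = Rd)
    (hRd3 : (R * Rd)ᵀ = R * Rd) (hRd4 : (Rd * R)ᵀ = Rd * R)
    (X : Matrix (Fin n) (Fin n) ℝ) (hX : Xᵀ = X)
    (s : ℂ)
    (h1 : IsUnit (s • (1 : Matrix (Fin n) (Fin n) ℂ) - cm A).det)
    (h2 : IsUnit (s • (1 : Matrix (Fin n) (Fin n) ℂ)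
        - cm (A - B * (Rd * (S + X * B)ᵀ))).det) :
    (cm C * (s • (1 : Matrix (Fin n) (Fin n) ℂ) - cm A)⁻¹ * cm B + cm D) *
      ((1 : Matrix (Fin m) (Fin m) ℂ) - cm Rd * (cm (S + X * B))ᵀ *
        (s • (1 : Matrix (Fin n) (Fin n) ℂ) - cm (A - B * (Rd * (S + X * B)ᵀ)))⁻¹ * cm B)
    = cm (C - D * (Rd * (S + X * B)ᵀ)) *
        (s • (1 : Matrix (Fin n) (Fin n) ℂ) - cm (A - B * (Rd * (S + X * B)ᵀ)))⁻¹ * cm B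
      + cm D := by
  simp only [cm_sub, cm_mul, cm_transpose] at h2 ⊢
  exact stmt_8_general _ _ _ _ _ s h1 h2
end

section
/- (The restriction of A_X to 𝓡_{0,X} is independent of X.) Let X and Y be two symmetric solutions of CGCARE(Σ) and set F = A − B R† Sᵀ. Then for every vector v in the ℝ-linear span of the columns of the matrices F^k (B G), k = 0, 1, …, n−1, one has A_X v = A_Y v. -/
/-!
Write `F = A - B R† Sᴴ` and `Q₀ = Q - S R† Sᴴ`, where all that matters of `R†` is `R R† R = R`.
The closed-loop matrix `A - B R† (S + X B)ᴴ` agrees with `F` on `ker X`, so it suffices that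
`ker X` contains the reachable subspace, for every solution `X`.

On `ker X` the Riccati equation collapses to `X F w + Q₀ w = 0`. Pairing with `w` gives
`wᴴ Q₀ w = 0`, hence `Q₀ w = 0` because the generalized Schur complement `Q₀` of the Popov matrix
is positive semidefinite, hence `X F w = 0`: the kernel of `X` is `F`-invariant. Finally `ker R` is
contained in both `ker S` and `ker (S + X B)`, so `X B` vanishes on `ker R`, the range of
`1 - R† R`.
-/

open Matrix

variable {α 𝕜 ι κ μ : Type*}

lemma mul_innerInverse_mul_of_ker_le [Ring α] [Fintype κ] [Fintype μ] {S : Matrix ι κ α}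
    {R : Matrix μ κ α} {Rd : Matrix κ μ α} (hRd : R * Rd * R = R)
    (hker : ∀ u, R *ᵥ u = 0 → S *ᵥ u = 0) : S * (Rd * R) = S := by
  classical
  refine ext_of_mulVec_single fun j => ?_
  have hR : R *ᵥ ((Rd * R) *ᵥ Pi.single j 1 - Pi.single j 1) = 0 := by
    rw [mulVec_sub, mulVec_mulVec, ← Matrix.mul_assoc, hRd, sub_self]
  rw [← mulVec_mulVec, ← sub_eq_zero, ← mulVec_sub, hker _ hR]

section PopovMatrix

open scoped ComplexOrder

variable [RCLike 𝕜] [Finite ι] [Fintype κ] {Q : Matrix ι ι 𝕜} {S : Matrix ι κ 𝕜}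
  {R Rd : Matrix κ κ 𝕜}

lemma mulVec_eq_zero_of_posSemidef_fromBlocks (hPi : (fromBlocks Q S Sᴴ R).PosSemidef)
    {u : κ → 𝕜} (hu : R *ᵥ u = 0) : S *ᵥ u = 0 := by
  have := Fintype.ofFinite ι
  have hmul : fromBlocks Q S Sᴴ R *ᵥ Sum.elim 0 u = Sum.elim (S *ᵥ u) 0 := by
    simp [fromBlocks_mulVec, hu]
  have hzero := (hPi.dotProduct_mulVec_zero_iff (Sum.elim 0 u)).1 <| by
    simp [hmul, dotProduct, Fintype.sum_sum_type]
  rw [hmul] at hzero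
  exact funext fun i => congrFun hzero (Sum.inl i)

lemma mul_innerInverse_mul_of_posSemidef_fromBlocks (hPi : (fromBlocks Q S Sᴴ R).PosSemidef)
    (hRd : R * Rd * R = R) : S * (Rd * R) = S :=
  mul_innerInverse_mul_of_ker_le hRd fun _ => mulVec_eq_zero_of_posSemidef_fromBlocks hPi

lemma innerInverse_mul_conjTranspose_of_posSemidef_fromBlocks
    (hPi : (fromBlocks Q S Sᴴ R).PosSemidef) (hRd : R * Rd * R = R) : R * Rd * Sᴴ = Sᴴ := by
  have hR : Rᴴ = R := (isHermitian_fromBlocks_iff.1 hPi.isHermitian).2.2.2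
  have hS : Sᴴ = R * (Rdᴴ * Sᴴ) := by
    simpa only [conjTranspose_mul, hR, Matrix.mul_assoc] using
      (congrArg conjTranspose (mul_innerInverse_mul_of_posSemidef_fromBlocks hPi hRd)).symm
  rw [hS, ← Matrix.mul_assoc, hRd]

lemma posSemidef_schurComplement_innerInverse (hPi : (fromBlocks Q S Sᴴ R).PosSemidef)
    (hRd : R * Rd * R = R) : (Q - S * Rd * Sᴴ).PosSemidef := by
  classical
  have := Fintype.ofFinite ι
  have hmul : fromBlocks Q S Sᴴ R * fromRows (1 : Matrix ι ι 𝕜) (-(Rd * Sᴴ)) =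
      fromRows (Q - S * Rd * Sᴴ) (0 : Matrix κ ι 𝕜) := by
    simp [fromBlocks_mul_fromRows, ← Matrix.mul_assoc, sub_eq_add_neg,
      innerInverse_mul_conjTranspose_of_posSemidef_fromBlocks hPi hRd]
  have hcongr := hPi.conjTranspose_mul_mul_same (fromRows (1 : Matrix ι ι 𝕜) (-(Rd * Sᴴ)))
  rwa [Matrix.mul_assoc, hmul, conjTranspose_fromRows_eq_fromCols_conjTranspose,
    fromCols_mul_fromRows, conjTranspose_one, Matrix.one_mul, Matrix.mul_zero, add_zero] at hcongr

end PopovMatrix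

section ReachableSubspace

variable [CommSemiring α] [Fintype ι] [DecidableEq ι]

/-- The reachable subspace of the pair `(F, C)`, spanned by the columns of all the matrices
`F ^ k * C`. Over a commutative ring the powers below the dimension span the same subspace, by the
Cayley-Hamilton theorem; allowing all `k` makes the `F`-invariance immediate. -/
def reachableSubspace (F : Matrix ι ι α) (C : Matrix ι κ α) : Submodule α (ι → α) :=
  Submodule.span α (⋃ k : ℕ, Set.range (F ^ k * C).col)

lemma reachableSubspace_le {F : Matrix ι ι α} {C : Matrix ι κ α} {W : Submodule α (ι → α)}
    (hF : ∀ w ∈ W, F *ᵥ w ∈ W) (hC : ∀ j, C.col j ∈ W) : reachableSubspace F C ≤ W := by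
  refine Submodule.span_le.2 (Set.iUnion_subset fun k => Set.range_subset_iff.2 fun j => ?_)
  induction k with
  | zero =>
    rw [pow_zero, Matrix.one_mul]
    exact hC j
  | succ k ih =>
    rw [pow_succ', Matrix.mul_assoc]
    exact hF _ ih

lemma span_iUnion_lt_range_col_le_reachableSubspace (F : Matrix ι ι α) (C : Matrix ι κ α) (n : ℕ) :
    Submodule.span α (⋃ k < n, Set.range (F ^ k * C).col) ≤ reachableSubspace F C :=
  Submodule.span_mono (Set.iUnion_mono fun _ => Set.iUnion_subset fun _ => subset_rfl)

end ReachableSubspace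

section Riccati

variable [Ring α] [StarRing α] [Fintype ι] {A Q X : Matrix ι ι α} {B S : Matrix ι κ α}
  {Rd : Matrix κ κ α} {w : ι → α}

lemma conjTranspose_add_mul_mulVec_of_mulVec_eq_zero (hX : X.IsHermitian) (hw : X *ᵥ w = 0) :
    (S + X * B)ᴴ *ᵥ w = Sᴴ *ᵥ w := by
  rw [conjTranspose_add, conjTranspose_mul, hX.eq, add_mulVec, ← mulVec_mulVec, hw, mulVec_zero,
    add_zero]

variable [Fintype κ]

lemma closedLoop_mulVec_of_mulVec_eq_zero (hX : X.IsHermitian) (hw : X *ᵥ w = 0) :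
    (A - B * (Rd * (S + X * B)ᴴ)) *ᵥ w = (A - B * (Rd * Sᴴ)) *ᵥ w := by
  simp only [sub_mulVec, ← mulVec_mulVec, conjTranspose_add_mul_mulVec_of_mulVec_eq_zero hX hw]

/-- `X` is a Hermitian solution of the generalized continuous algebraic Riccati equation with data
`A, Q, B, S`. The matrix `Rd` plays the part of `R†` and is constrained separately. -/
structure IsGCARE (A Q : Matrix ι ι α) (B S : Matrix ι κ α) (Rd : Matrix κ κ α)
    (X : Matrix ι ι α) : Prop where
  isHermitian : X.IsHermitian
  riccati : X * A + Aᴴ * X - (S + X * B) * Rd * (S + X * B)ᴴ + Q = 0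

/-- `X` is a Hermitian solution of the constrained generalized continuous algebraic Riccati
equation: it solves the generalized equation and `ker R ⊆ ker (S + X B)`. -/
structure IsCGCARE (A Q : Matrix ι ι α) (B S : Matrix ι κ α) (R Rd : Matrix κ κ α)
    (X : Matrix ι ι α) : Prop extends IsGCARE A Q B S Rd X where
  ker_le : ∀ u, R *ᵥ u = 0 → (S + X * B) *ᵥ u = 0

lemma IsGCARE.mulVec_add_mulVec_eq_zero (h : IsGCARE A Q B S Rd X) (hw : X *ᵥ w = 0) :
    X *ᵥ ((A - B * (Rd * Sᴴ)) *ᵥ w) + (Q - S * Rd * Sᴴ) *ᵥ w = 0 := by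
  have hric := congrArg (· *ᵥ w) h.riccati
  simp only [add_mulVec, sub_mulVec, ← mulVec_mulVec, hw, mulVec_zero, zero_mulVec,
    conjTranspose_add_mul_mulVec_of_mulVec_eq_zero h.isHermitian hw] at hric
  simp only [sub_mulVec, mulVec_sub, ← mulVec_mulVec]
  rw [← hric]
  abel

end Riccati

section ReachableKernel

open scoped ComplexOrder

variable [RCLike 𝕜] [Fintype ι] [Fintype κ] {A Q X Y : Matrix ι ι 𝕜} {B S : Matrix ι κ 𝕜}
  {R Rd : Matrix κ κ 𝕜} {w : ι → 𝕜}

lemma IsGCARE.mulVec_mulVec_eq_zero (h : IsGCARE A Q B S Rd X)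
    (hPi : (fromBlocks Q S Sᴴ R).PosSemidef) (hRd : R * Rd * R = R) (hw : X *ᵥ w = 0) :
    X *ᵥ ((A - B * (Rd * Sᴴ)) *ᵥ w) = 0 := by
  have hric := h.mulVec_add_mulVec_eq_zero hw
  have hwX : star w ᵥ* X = 0 := by
    rw [← star_eq_zero, star_vecMul, h.isHermitian.eq, star_star, hw]
  have hform : star w ⬝ᵥ (Q - S * Rd * Sᴴ) *ᵥ w = 0 := by
    simpa only [dotProduct_add, dotProduct_mulVec _ X, hwX, zero_dotProduct, zero_add,
      dotProduct_zero] using congrArg (star w ⬝ᵥ ·) hric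
  have hschur := posSemidef_schurComplement_innerInverse hPi hRd
  rwa [(hschur.dotProduct_mulVec_zero_iff w).1 hform, add_zero] at hric

namespace IsCGCARE

variable [DecidableEq κ]

lemma mul_mul_one_sub_eq_zero (h : IsCGCARE A Q B S R Rd X)
    (hPi : (fromBlocks Q S Sᴴ R).PosSemidef) (hRd : R * Rd * R = R) :
    X * (B * (1 - Rd * R)) = 0 := by
  have hS := mul_innerInverse_mul_of_posSemidef_fromBlocks hPi hRd
  have hSX := mul_innerInverse_mul_of_ker_le hRd h.ker_le
  rw [Matrix.add_mul, hS, add_right_inj] at hSX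
  rw [← Matrix.mul_assoc, Matrix.mul_sub, Matrix.mul_one, hSX, sub_self]

variable [DecidableEq ι]

lemma reachableSubspace_le_ker (h : IsCGCARE A Q B S R Rd X)
    (hPi : (fromBlocks Q S Sᴴ R).PosSemidef) (hRd : R * Rd * R = R) :
    reachableSubspace (A - B * (Rd * Sᴴ)) (B * (1 - Rd * R)) ≤ LinearMap.ker X.mulVecLin := by
  refine reachableSubspace_le (fun w hw => h.mulVec_mulVec_eq_zero hPi hRd hw) fun j => ?_
  exact congrArg (·.col j) (h.mul_mul_one_sub_eq_zero hPi hRd)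

lemma closedLoop_mulVec_eq (h : IsCGCARE A Q B S R Rd X)
    (hPi : (fromBlocks Q S Sᴴ R).PosSemidef) (hRd : R * Rd * R = R)
    (hw : w ∈ reachableSubspace (A - B * (Rd * Sᴴ)) (B * (1 - Rd * R))) :
    (A - B * (Rd * (S + X * B)ᴴ)) *ᵥ w = (A - B * (Rd * Sᴴ)) *ᵥ w :=
  closedLoop_mulVec_of_mulVec_eq_zero h.isHermitian (h.reachableSubspace_le_ker hPi hRd hw)

end IsCGCARE

theorem stmt_15_general [DecidableEq ι] [DecidableEq κ]
    (hPi : (fromBlocks Q S Sᴴ R).PosSemidef) (hRd : R * Rd * R = R)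
    (hX : IsCGCARE A Q B S R Rd X) (hY : IsCGCARE A Q B S R Rd Y)
    (hw : w ∈ reachableSubspace (A - B * (Rd * Sᴴ)) (B * (1 - Rd * R))) :
    (A - B * (Rd * (S + X * B)ᴴ)) *ᵥ w = (A - B * (Rd * (S + Y * B)ᴴ)) *ᵥ w :=
  (hX.closedLoop_mulVec_eq hPi hRd hw).trans (hY.closedLoop_mulVec_eq hPi hRd hw).symm

end ReachableKernel

theorem stmt_15 (n m : ℕ) (hn : 0 < n) (hm : 0 < m)
    (A Q : Matrix (Fin n) (Fin n) ℝ) (B S : Matrix (Fin n) (Fin m) ℝ)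
    (R : Matrix (Fin m) (Fin m) ℝ)
    (hPi : (Matrix.fromBlocks Q S Sᵀ R).PosSemidef)
    (Rd : Matrix (Fin m) (Fin m) ℝ)
    (hRd1 : R * Rd * R = R) (hRd2 : Rd * R * Rd = Rd)
    (hRd3 : (R * Rd)ᵀ = R * Rd) (hRd4 : (Rd * R)ᵀ = Rd * R)
    (X : Matrix (Fin n) (Fin n) ℝ) (hX : Xᵀ = X)
    (hgcareX : X * A + Aᵀ * X - (S + X * B) * Rd * (S + X * B)ᵀ + Q = 0)
    (hkerX : ∀ v : Fin m → ℝ, R.mulVec v = 0 → (S + X * B).mulVec v = 0)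
    (Y : Matrix (Fin n) (Fin n) ℝ) (hY : Yᵀ = Y)
    (hgcareY : Y * A + Aᵀ * Y - (S + Y * B) * Rd * (S + Y * B)ᵀ + Q = 0)
    (hkerY : ∀ v : Fin m → ℝ, R.mulVec v = 0 → (S + Y * B).mulVec v = 0) :
    ∀ v : Fin n → ℝ,
      v ∈ Submodule.span ℝ (⋃ k < n, Set.range fun j : Fin m =>
        fun i : Fin n => ((A - B * (Rd * Sᵀ)) ^ k *
          (B * ((1 : Matrix (Fin m) (Fin m) ℝ) - Rd * R))) i j) →
      (A - B * (Rd * (S + X * B)ᵀ)).mulVec v =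
      (A - B * (Rd * (S + Y * B)ᵀ)).mulVec v := by
  simp only [← conjTranspose_eq_transpose_of_trivial] at hPi hX hY hgcareX hgcareY ⊢
  exact fun v hv => stmt_15_general hPi hRd1 ⟨⟨hX, hgcareX⟩, hkerX⟩ ⟨⟨hY, hgcareY⟩, hkerY⟩
    (span_iUnion_lt_range_col_le_reachableSubspace _ _ n hv)
end
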